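/- For all integers n > n′ ≥ 1, the type 𝒯_{n,n′} has recoverable consensus number exactly n′: there is a recoverable wait-free binary consensus algorithm for n′ processes using objects of type 𝒯_{n,n′} together with registers, and there is no recoverable wait-free binary consensus algorithm for n′+1 processes using objects of type 𝒯_{n,n′} together with registers. -/

import Mathlib

namespace RecoverableConsensus

/-- A deterministic object type: a set of values, operations and responses together with a
transition function assigning to each (value, operation) pair a unique response and a unique
resulting value. -/
structure DetType : Type 1 where
  Value : Type
  Op : Type
  Resp : Type
  δ : Value → Op → Resp × Value

/-- A type is readable if it has a Read operation that returns (an injective encoding of)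
the current value of the object without changing it. -/
def Readable (T : DetType) : Prop :=
  ∃ (read : T.Op) (ι : T.Value → T.Resp),
    Function.Injective ι ∧ ∀ v, T.δ v read = (ι v, v)

/-- The register type over the value set `V`: the operation `none` is Read (returning the
current value without changing it) and `some v` is Write(v) (changing the value to `v`). -/
def RegisterType (V : Type) : DetType where
  Value := V
  Op := Option V
  Resp := V
  δ := fun u op =>
    match op with
    | none => (u, u)
    | some v => (v, v)

def IsRegister (T : DetType) : Prop := ∃ V : Type, T = RegisterType V

/-- An event is either a step by a process or a crash of a process. -/
inductive Event (n : ℕ) : Type where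
  | step : Fin n → Event n
  | crash : Fin n → Event n
deriving DecidableEq

/-- An algorithm for `n` processes: a collection of shared objects, each with a deterministic
type and an initial value, and for each process a deterministic state machine with an initial
state depending on the process's binary input.  Each state determines the process's next step
(`pending`: an operation applied to a designated object, or `none` for a no-op); the state
reached after a step is determined by the current state and the response received (`next`).
`output i s = some v` means that `s` is an output state of process `i` for the value `v`;
processes in output states take only no-op steps. -/
structure Algorithm (n : ℕ) : Type 1 where
  ObjIdx : Type
  objType : ObjIdx → DetType
  objInit : (o : ObjIdx) → (objType o).Value
  PState : Fin n → Type
  init : (i : Fin n) → Bool → PState i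
  pending : (i : Fin n) → PState i → Option ((o : ObjIdx) × (objType o).Op)
  next : (i : Fin n) → PState i → (o : ObjIdx) → (objType o).Resp → PState i
  output : (i : Fin n) → PState i → Option Bool
  output_noop : ∀ i s, output i s ≠ none → pending i s = none

/-- A configuration assigns a state to each process and a value to each object. -/
structure Config {n : ℕ} (A : Algorithm n) : Type where
  pstate : (i : Fin n) → A.PState i
  oval : (o : A.ObjIdx) → (A.objType o).Value

variable {n : ℕ}

/-- The effect of one event on a configuration.  A crash of `p_i` resets `p_i` to its initial
state (for its input) and leaves all object values unchanged; a step of `p_i` applies its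
pending operation (if any) to the designated object, receiving the response determined by the
type's transition function. -/
noncomputable def applyEvent (A : Algorithm n) (input : Fin n → Bool) (C : Config A) :
    Event n → Config A
  | .crash i => { C with pstate := Function.update C.pstate i (A.init i (input i)) }
  | .step i =>
    letI : DecidableEq A.ObjIdx := Classical.decEq _
    match A.pending i (C.pstate i) with
    | none => C
    | some ⟨o, op⟩ =>
      { pstate := Function.update C.pstate i
          (A.next i (C.pstate i) o ((A.objType o).δ (C.oval o) op).1),
        oval := Function.update C.oval o ((A.objType o).δ (C.oval o) op).2 }

/-- Since the algorithm is deterministic, a finite execution from `C` is determined by its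
schedule, i.e. its list of events; `run A input C σ` is the configuration `Cσ` reached by
applying the events of `σ` in order from `C`. -/
noncomputable def run (A : Algorithm n) (input : Fin n → Bool) (C : Config A) :
    List (Event n) → Config A
  | [] => C
  | e :: σ => run A input (applyEvent A input C e) σ

/-- The initial configuration: every process in its initial state, every object at its
initial value. -/
def initConfig (A : Algorithm n) (input : Fin n → Bool) : Config A :=
  ⟨fun i => A.init i (input i), A.objInit⟩

/-- Process `i` has decided `v` in `Cσ`: at some point along the execution `σ` from `C`,
process `i` was in an output state for `v`. -/
def HasDecided (A : Algorithm n) (input : Fin n → Bool) (C : Config A)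
    (σ : List (Event n)) (i : Fin n) (v : Bool) : Prop :=
  ∃ τ, τ <+: σ ∧ A.output i ((run A input C τ).pstate i) = some v

def CrashFree (σ : List (Event n)) : Prop := ∀ i : Fin n, Event.crash i ∉ σ

/-- The first `k` events of an infinite execution. -/
def initSeg (e : ℕ → Event n) (k : ℕ) : List (Event n) := (List.range k).map e

/-- Agreement: in every execution no two processes decide different values. -/
def Agreement (A : Algorithm n) : Prop :=
  ∀ (input : Fin n → Bool) (σ : List (Event n)) (i j : Fin n) (v w : Bool),
    HasDecided A input (initConfig A input) σ i v →
    HasDecided A input (initConfig A input) σ j w → v = w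

/-- Validity: every decided value is the input of some process. -/
def Validity (A : Algorithm n) : Prop :=
  ∀ (input : Fin n → Bool) (σ : List (Event n)) (i : Fin n) (v : Bool),
    HasDecided A input (initConfig A input) σ i v → ∃ j, input j = v

/-- Recoverable wait-freedom: every process, starting from its initial state, either crashes
or decides within a finite number of its own steps.  Equivalently: in every infinite execution
in which process `i` starts at (or is reset by a crash to) its initial state, takes infinitely
many steps and crashes only finitely often, it eventually reaches an output state. -/
def RecWaitFree (A : Algorithm n) : Prop :=
  ∀ (input : Fin n → Bool) (C : Config A) (e : ℕ → Event n) (i : Fin n),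
    (C.pstate i = A.init i (input i) ∨ ∃ k, e k = Event.crash i) →
    (∀ m, ∃ k, m ≤ k ∧ e k = Event.step i) →
    (∃ m, ∀ k, m ≤ k → e k ≠ Event.crash i) →
    ∃ (k : ℕ) (v : Bool), A.output i ((run A input C (initSeg e k)).pstate i) = some v

/-- A recoverable wait-free binary consensus algorithm. -/
def SolvesRecConsensus (A : Algorithm n) : Prop :=
  Agreement A ∧ Validity A ∧ RecWaitFree A

/-- Agreement restricted to crash-free executions. -/
def AgreementCF (A : Algorithm n) : Prop :=
  ∀ (input : Fin n → Bool) (σ : List (Event n)), CrashFree σ →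
    ∀ (i j : Fin n) (v w : Bool),
      HasDecided A input (initConfig A input) σ i v →
      HasDecided A input (initConfig A input) σ j w → v = w

/-- Validity restricted to crash-free executions. -/
def ValidityCF (A : Algorithm n) : Prop :=
  ∀ (input : Fin n → Bool) (σ : List (Event n)), CrashFree σ →
    ∀ (i : Fin n) (v : Bool),
      HasDecided A input (initConfig A input) σ i v → ∃ j, input j = v

/-- Wait-freedom: in crash-free executions, every process that takes infinitely many steps
decides. -/
def WaitFree (A : Algorithm n) : Prop :=
  ∀ (input : Fin n → Bool) (e : ℕ → Event n),
    (∀ (k : ℕ) (i : Fin n), e k ≠ Event.crash i) →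
    ∀ i : Fin n, (∀ m, ∃ k, m ≤ k ∧ e k = Event.step i) →
    ∃ (k : ℕ) (v : Bool),
      A.output i ((run A input (initConfig A input) (initSeg e k)).pstate i) = some v

/-- A wait-free binary consensus algorithm (for the model in which crashes are permanent,
i.e. only crash-free executions are relevant). -/
def SolvesWFConsensus (A : Algorithm n) : Prop :=
  AgreementCF A ∧ ValidityCF A ∧ WaitFree A

/-- The number of crashes of process `i` in `σ`. -/
def crashCount (i : Fin n) (σ : List (Event n)) : ℕ :=
  (σ.filter fun e => decide (e = Event.crash i)).length

def isStepBelow (i : Fin n) : Event n → Bool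
  | .step j => decide (j < i)
  | .crash _ => false

/-- The total number of steps taken by processes `p_0, …, p_{i-1}` in `σ`. -/
def stepsBelow (i : Fin n) (σ : List (Event n)) : ℕ := (σ.filter (isStepBelow i)).length

/-- The crash bound: for every process `p_i`, the number of crashes of `p_i` is at most
`z·n` times the total number of steps of `p_0, …, p_{i-1}` (for `i = 0` this says that `p_0`
never crashes). -/
def EMem (z : ℕ) (σ : List (Event n)) : Prop :=
  ∀ i : Fin n, crashCount i σ ≤ z * n * stepsBelow i σ

/-- `𝓔_z`: executions satisfying the crash bound. -/
def ESet (n z : ℕ) : Set (List (Event n)) := { σ | EMem z σ }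

/-- `𝓔*_z`: executions satisfying the crash bound in every prefix. -/
def EStarSet (n z : ℕ) : Set (List (Event n)) := { σ | ∀ τ, τ <+: σ → EMem z τ }

/-- `e` is an event by a process in `P`. -/
def eventBy (P : Set (Fin n)) : Event n → Prop
  | .step i => i ∈ P
  | .crash i => i ∈ P

/-- The set of processes `P` is `v`-univalent in the execution `α` from `C` with respect to
the set of executions `𝒜`. -/
def VUnivalentIn (A : Algorithm n) (input : Fin n → Bool) (C : Config A)
    (𝒜 : Set (List (Event n))) (P : Set (Fin n)) (α : List (Event n)) (v : Bool) : Prop :=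
  α ∈ 𝒜 ∧ ∀ β : List (Event n), (∀ e ∈ β, eventBy P e) → (α ++ β) ∈ 𝒜 →
    ∀ (i : Fin n) (w : Bool), HasDecided A input C (α ++ β) i w → w = v

/-- The set of processes `P` is bivalent in the execution `α` from `C` with respect to `𝒜`. -/
def BivalentIn (A : Algorithm n) (input : Fin n → Bool) (C : Config A)
    (𝒜 : Set (List (Event n))) (P : Set (Fin n)) (α : List (Event n)) : Prop :=
  ∀ v : Bool, ∃ β : List (Event n), (∀ e ∈ β, eventBy P e) ∧ (α ++ β) ∈ 𝒜 ∧
    ∃ i : Fin n, HasDecided A input C (α ++ β) i v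

/-- `P` is univalent in `α` with respect to `𝒜`: `v`-univalent for some `v`. -/
def UnivalentIn (A : Algorithm n) (input : Fin n → Bool) (C : Config A)
    (𝒜 : Set (List (Event n))) (P : Set (Fin n)) (α : List (Event n)) : Prop :=
  ∃ v : Bool, VUnivalentIn A input C 𝒜 P α v

/-- `α ∈ 𝒜` is critical with respect to `𝒜`: `α` is bivalent with respect to `𝒜` and every
nonempty extension of `α` inside `𝒜` is univalent with respect to `𝒜`. -/
def Critical (A : Algorithm n) (input : Fin n → Bool) (C : Config A)
    (𝒜 : Set (List (Event n))) (α : List (Event n)) : Prop :=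
  α ∈ 𝒜 ∧ BivalentIn A input C 𝒜 Set.univ α ∧
  ∀ β : List (Event n), β ≠ [] → (α ++ β) ∈ 𝒜 → UnivalentIn A input C 𝒜 Set.univ (α ++ β)

/-- Process `i` is on team `v` in `Cα` (with respect to `𝒜`): `α p_i` is `v`-univalent. -/
def OnTeam (A : Algorithm n) (input : Fin n → Bool) (C : Config A)
    (𝒜 : Set (List (Event n))) (α : List (Event n)) (i : Fin n) (v : Bool) : Prop :=
  VUnivalentIn A input C 𝒜 Set.univ (α ++ [Event.step i]) v

/-- Process `i` is poised to apply an operation to object `O` in configuration `C`. -/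
def PoisedAt (A : Algorithm n) (C : Config A) (i : Fin n) (O : A.ObjIdx) : Prop :=
  ∃ op, A.pending i (C.pstate i) = some ⟨O, op⟩

/-- `σ ∈ 𝒮(P)`: a crash-free schedule in which each process of `P` takes at most one step
and no other process takes a step. -/
def IsSched (P : Set (Fin n)) (σ : List (Event n)) : Prop :=
  ∃ l : List (Fin n), l.Nodup ∧ (∀ j ∈ l, j ∈ P) ∧ σ = l.map Event.step

/-- The schedule `λ_k = c_k c_{k+1} ⋯ c_{n-1}`. -/
def lambdaSched (n k : ℕ) : List (Event n) :=
  ((List.finRange n).filter fun j => decide (k ≤ j.val)).map Event.crash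

/-- `U_v`: the set of values of object `O` reachable from `Dα` by a schedule in `𝒮(𝒫)`
whose first process is on team `v`. -/
def USetCfg (A : Algorithm n) (input : Fin n → Bool) (D : Config A)
    (𝒜 : Set (List (Event n))) (α : List (Event n)) (O : A.ObjIdx) (v : Bool) :
    Set (A.objType O).Value :=
  { w | ∃ (j : Fin n) (σ : List (Event n)), OnTeam A input D 𝒜 α j v ∧
        IsSched {k : Fin n | k ≠ j} σ ∧
        w = (run A input D (α ++ Event.step j :: σ)).oval O }

/-- The configuration `Dα` is `v`-hiding. -/
def VHiding (A : Algorithm n) (input : Fin n → Bool) (D : Config A)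
    (𝒜 : Set (List (Event n))) (α : List (Event n)) (O : A.ObjIdx) (v : Bool) : Prop :=
  USetCfg A input D 𝒜 α O false ∩ USetCfg A input D 𝒜 α O true = ∅ ∧
  (run A input D α).oval O ∈ USetCfg A input D 𝒜 α O v

/-- The configuration `Dα` is `n`-recording. -/
def NRecordingCfg (A : Algorithm n) (input : Fin n → Bool) (D : Config A)
    (𝒜 : Set (List (Event n))) (α : List (Event n)) (O : A.ObjIdx) : Prop :=
  USetCfg A input D 𝒜 α O false ∩ USetCfg A input D 𝒜 α O true = ∅ ∧
  ∀ v : Bool, (run A input D α).oval O ∈ USetCfg A input D 𝒜 α O v →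
    ∃! j : Fin n, OnTeam A input D 𝒜 α j (!v)

/-- Apply the operations `o i` of the processes listed in `σ`, in order, to an object of type
`T`, starting from the value `u`. -/
def applyOps (T : DetType) (o : Fin n → T.Op) : T.Value → List (Fin n) → T.Value
  | u, [] => u
  | u, i :: σ => applyOps T o (T.δ u (o i)).2 σ

/-- `U_x`: the set of values obtainable by applying the operations of the processes of a
duplicate-free schedule whose first process is on team `x` to an object with initial value
`u`. -/
def UVals (T : DetType) (o : Fin n → T.Op) (u : T.Value) (team : Fin n → Bool) (x : Bool) :
    Set T.Value :=
  { v | ∃ (i : Fin n) (σ : List (Fin n)), team i = x ∧ (i :: σ).Nodup ∧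
        v = applyOps T o u (i :: σ) }

/-- A deterministic type `T` is `n`-recording. -/
def NRecording (n : ℕ) (T : DetType) : Prop :=
  ∃ (u : T.Value) (team : Fin n → Bool) (o : Fin n → T.Op),
    (∀ x : Bool, ∃ i, team i = x) ∧
    (UVals T o u team false ∩ UVals T o u team true = ∅) ∧
    (∀ x : Bool, u ∈ UVals T o u team x → ∃! i, team i = !x)

end RecoverableConsensus

namespace RecoverableConsensus

/-- The values of the type `𝒯_{n,n'}`: `s`, `s_⊥`, and `s_{x,i}` for `x ∈ {0,1}` and
`i ∈ {1, …, n-1}` (here `mid x i` with `i : Fin (n-1)` represents `s_{x, i+1}`). -/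
inductive TVal (n : ℕ) : Type where
  | s : TVal n
  | bot : TVal n
  | mid : Bool → Fin (n - 1) → TVal n
deriving DecidableEq

/-- The operations of `𝒯_{n,n'}`. -/
inductive TOp : Type where
  | op0 | op1 | opR
deriving DecidableEq

/-- The responses of `𝒯_{n,n'}`: a bit, a value, or `⊥`. -/
inductive TResp (n : ℕ) : Type where
  | bit : Bool → TResp n
  | val : TVal n → TResp n
  | botR : TResp n
deriving DecidableEq

/-- The deterministic (non-readable) type `𝒯_{n,n'}` for `n > n' ≥ 1`. -/
def TType (n n' : ℕ) (hn : 2 ≤ n) : DetType where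
  Value := TVal n
  Op := TOp
  Resp := TResp n
  δ := fun v op =>
    match v, op with
    | .s, .op0 => (.bit false, .mid false ⟨0, by omega⟩)
    | .s, .op1 => (.bit true, .mid true ⟨0, by omega⟩)
    | .s, .opR => (.val .s, .s)
    | .bot, _ => (.botR, .bot)
    | .mid x i, .op0 =>
        if h : i.val + 1 < n - 1 then (.bit x, .mid x ⟨i.val + 1, h⟩) else (.bit x, .bot)
    | .mid x i, .op1 =>
        if h : i.val + 1 < n - 1 then (.bit x, .mid x ⟨i.val + 1, h⟩) else (.bit x, .bot)
    | .mid x i, .opR =>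
        if i.val + 1 ≤ n' then (.val (.mid x i), .mid x i) else (.botR, .bot)

/-- The algorithm uses only objects of type `T` together with registers. -/
def UsesTypeAndRegisters {n : ℕ} (A : Algorithm n) (T : DetType) : Prop :=
  ∀ o : A.ObjIdx, A.objType o = T ∨ IsRegister (A.objType o)

end RecoverableConsensus

/-!
For at most `n'` processes (and fewer than `n`), one object of type `𝒯_{n,n'}` suffices: a process
reads it, applies the update for its own input only if the value is still `s`, and decides for the
first update. A process that restarts after its update has been applied reads the value of the
object without applying a second update, so that at most `n'` updates are ever applied and the
value always reveals the first of them.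

Conversely, consider executions with a crash budget: one process `p₀` never crashes, every step of
`p₀` resets the budget to an arbitrary natural number, and each crash of another process uses up
some of it. No process can crash infinitely often unless `p₀` takes infinitely many steps, so a
valence argument yields a configuration in which the next step decides the outcome. There all
processes are about to access the same object, and the operations of opposite teams conflict, which
is impossible on a register and forces updates of value `s` on an object of type `𝒯_{n,n'}`. Once
each of more than `n'` (or at least `n`) processes has applied its update, the value reveals the
first update only through the bits returned by updates, of which fewer than `n` remain. A process
other than `p₀` that crashes after every such response therefore cannot tell the teams apart, and
the step of `p₀` pays for these crashes.
-/

open Filter Relation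

namespace RecoverableConsensus

lemma eventually_succ_eq_of_eventually_succ_le {α : Type*} [PartialOrder α] [WellFoundedLT α]
    {f : ℕ → α} (hf : ∀ᶠ k in atTop, f (k + 1) ≤ f k) : ∀ᶠ k in atTop, f (k + 1) = f k := by
  obtain ⟨m, hm⟩ := eventually_atTop.1 hf
  obtain ⟨M, hM⟩ := WellFoundedLT.antitone_chain_condition (antitone_add_nat_of_succ_le hm)
  filter_upwards [eventually_ge_atTop (M + m)] with k hk
  obtain ⟨d, rfl⟩ := Nat.exists_eq_add_of_le hk
  have h := (hM (M + d + 1) (by omega)).symm.trans (hM (M + d) (by omega))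
  convert h using 2 <;> omega

lemma sum_update_add {ι α M : Type*} [Fintype ι] [DecidableEq ι] [AddCommMonoid M] (g : α → M)
    (f : ι → α) (i : ι) (a : α) :
    ∑ j, g (Function.update f i a j) + g (f i) = ∑ j, g (f j) + g a := by
  have sum_compl : ∑ j ∈ {i}ᶜ, g (Function.update f i a j) = ∑ j ∈ {i}ᶜ, g (f j) :=
    Finset.sum_congr rfl fun j hj => by rw [Function.update_of_ne (by simpa using hj)]
  rw [Fintype.sum_eq_sum_compl_add i, Fintype.sum_eq_sum_compl_add i fun j => g (f j), sum_compl,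
    Function.update_self, add_right_comm]

section Executions

variable {N : ℕ} {A : Algorithm N} {input input' : Fin N → Bool} {C D : Config A} {i j : Fin N}

lemma run_append (C : Config A) (σ τ : List (Event N)) :
    run A input C (σ ++ τ) = run A input (run A input C σ) τ := by
  induction σ generalizing C with
  | nil => rfl
  | cons e _ ih => exact ih _

lemma initSeg_succ (e : ℕ → Event N) (k : ℕ) : initSeg e (k + 1) = initSeg e k ++ [e k] := by
  simp [initSeg, List.range_succ]

lemma initSeg_succ' (e : ℕ → Event N) (k : ℕ) :
    initSeg e (k + 1) = e 0 :: initSeg (fun k => e (k + 1)) k := by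
  simp [initSeg, List.range_succ_eq_map, Function.comp_def]

lemma run_initSeg_succ (C : Config A) (e : ℕ → Event N) (k : ℕ) :
    run A input C (initSeg e (k + 1)) = applyEvent A input (run A input C (initSeg e k)) (e k) := by
  rw [initSeg_succ, run_append]
  rfl

lemma step_of_pending_eq_none (h : A.pending i (C.pstate i) = none) :
    applyEvent A input C (.step i) = C := by
  simp [applyEvent, h]

lemma step_of_pending_eq_some [DecidableEq A.ObjIdx] {o : A.ObjIdx} {a : (A.objType o).Op}
    (h : A.pending i (C.pstate i) = some ⟨o, a⟩) :
    applyEvent A input C (.step i) =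
      { pstate := Function.update C.pstate i
          (A.next i (C.pstate i) o ((A.objType o).δ (C.oval o) a).1),
        oval := Function.update C.oval o ((A.objType o).δ (C.oval o) a).2 } := by
  simp only [applyEvent, h]
  congr!

lemma step_pstate_of_ne (h : j ≠ i) :
    (applyEvent A input C (.step i)).pstate j = C.pstate j := by
  classical
  rcases hp : A.pending i (C.pstate i) with _ | ⟨o, a⟩
  · rw [step_of_pending_eq_none hp]
  · rw [step_of_pending_eq_some hp]
    exact Function.update_of_ne h ..

lemma step_oval [DecidableEq A.ObjIdx] {o : A.ObjIdx} {a : (A.objType o).Op}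
    (h : A.pending i (C.pstate i) = some ⟨o, a⟩) :
    (applyEvent A input C (.step i)).oval =
      Function.update C.oval o ((A.objType o).δ (C.oval o) a).2 := by
  rw [step_of_pending_eq_some h]

lemma crash_pstate_self : (applyEvent A input C (.crash i)).pstate i = A.init i (input i) :=
  Function.update_self ..

lemma crash_pstate_of_ne (h : j ≠ i) :
    (applyEvent A input C (.crash i)).pstate j = C.pstate j :=
  Function.update_of_ne h ..

lemma crash_oval : (applyEvent A input C (.crash i)).oval = C.oval := rfl

lemma crash_step_comm (h : i ≠ j) :
    applyEvent A input (applyEvent A input C (.crash i)) (.step j) =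
      applyEvent A input (applyEvent A input C (.step j)) (.crash i) := by
  classical
  have hj : (applyEvent A input C (.crash i)).pstate j = C.pstate j := crash_pstate_of_ne h.symm
  rcases hp : A.pending j (C.pstate j) with _ | ⟨o, a⟩
  · rw [step_of_pending_eq_none hp, step_of_pending_eq_none (hj ▸ hp)]
  · rw [step_of_pending_eq_some hp, step_of_pending_eq_some (hj.symm ▸ hp), hj]
    simp only [applyEvent, Function.update_comm h]

lemma output_applyEvent {e : Event N} {v : Bool} (he : e ≠ .crash i)
    (h : A.output i (C.pstate i) = some v) :
    A.output i ((applyEvent A input C e).pstate i) = some v := by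
  cases e with
  | step j =>
    obtain rfl | hj := eq_or_ne i j
    · rwa [step_of_pending_eq_none (A.output_noop i _ (by simp [h]))]
    · rwa [step_pstate_of_ne hj]
  | crash j => rwa [crash_pstate_of_ne fun hj => he (congrArg _ hj.symm)]

/-- The process `r` cannot tell the configurations `C` and `D` apart. -/
structure Indist (r : Fin N) (C D : Config A) : Prop where
  pstate : C.pstate r = D.pstate r
  oval : C.oval = D.oval

lemma Indist.step {r : Fin N} (h : Indist r C D) :
    Indist r (applyEvent A input C (.step r)) (applyEvent A input' D (.step r)) := by
  classical
  rcases hp : A.pending r (C.pstate r) with _ | ⟨o, a⟩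
  · rwa [step_of_pending_eq_none hp, step_of_pending_eq_none (h.pstate ▸ hp)]
  · rw [step_of_pending_eq_some hp, step_of_pending_eq_some (h.pstate ▸ hp)]
    exact ⟨by simp [h.pstate, h.oval], by simp [h.oval]⟩

lemma Indist.run_replicate_step {r : Fin N} (h : Indist r C D) (m : ℕ) :
    Indist r (run A input C (List.replicate m (.step r)))
      (run A input' D (List.replicate m (.step r))) := by
  induction m generalizing C D with
  | zero => exact h
  | succ _ ih => exact ih h.step

/-- `C` occurs in some execution, with arbitrary crashes, from the initial configuration. -/
def Reachable (A : Algorithm N) (input : Fin N → Bool) (C : Config A) : Prop :=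
  ∃ σ, run A input (initConfig A input) σ = C

lemma Reachable.initConfig : Reachable A input (initConfig A input) := ⟨[], rfl⟩

lemma Reachable.run (h : Reachable A input C) (σ : List (Event N)) :
    Reachable A input (run A input C σ) := by
  obtain ⟨τ, rfl⟩ := h
  exact ⟨τ ++ σ, run_append ..⟩

lemma Reachable.applyEvent (h : Reachable A input C) (e : Event N) :
    Reachable A input (applyEvent A input C e) :=
  h.run [e]

lemma Reachable.output_agree (h : Reachable A input C) (hA : Agreement A)
    {σ : List (Event N)} {v w : Bool} (hi : A.output i (C.pstate i) = some v)
    (hj : A.output j ((RecoverableConsensus.run A input C σ).pstate j) = some w) : v = w := by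
  obtain ⟨τ, rfl⟩ := h
  rw [← run_append] at hj
  exact hA input (τ ++ σ) i j v w ⟨τ, List.prefix_append .., hi⟩ ⟨τ ++ σ, List.prefix_rfl, hj⟩

/-- Recoverable wait-freedom speaks about executions in which the process starts in its initial
state; prepending the events that lead to `C` reduces every reachable `C` to that case. -/
theorem Reachable.exists_output (hC : Reachable A input C) (hW : RecWaitFree A)
    {e : ℕ → Event N} (hstep : ∃ᶠ k in atTop, e k = .step i)
    (hcrash : ∀ᶠ k in atTop, e k ≠ .crash i) :
    ∃ k v, A.output i ((RecoverableConsensus.run A input C (initSeg e k)).pstate i) = some v := by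
  obtain ⟨σ, rfl⟩ := hC
  induction σ using List.reverseRecOn generalizing e with
  | nil => exact hW input _ e i (.inl rfl) (frequently_atTop.1 hstep) (eventually_atTop.1 hcrash)
  | append_singleton σ f ih =>
    rw [run_append]
    by_cases hf : f = .crash i
    · subst hf
      exact hW input _ e i (.inl crash_pstate_self) (frequently_atTop.1 hstep)
        (eventually_atTop.1 hcrash)
    let e' : ℕ → Event N := fun k => Nat.casesOn k f e
    have hstep' : ∃ᶠ k in atTop, e' k = .step i :=
      (tendsto_add_atTop_nat 1).frequently (p := fun k => e' k = .step i) hstep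
    have hcrash' : ∀ᶠ k in atTop, e' k ≠ .crash i := by
      rw [← map_add_atTop_eq_nat 1]
      exact hcrash
    obtain ⟨_ | k, v, hk⟩ := ih hstep' hcrash'
    · exact ⟨0, v, output_applyEvent hf hk⟩
    · rw [initSeg_succ'] at hk
      exact ⟨k, v, hk⟩

lemma Reachable.exists_solo_output (hC : Reachable A input C) (hW : RecWaitFree A) (i : Fin N) :
    ∃ m v, A.output i
      ((RecoverableConsensus.run A input C (List.replicate m (.step i))).pstate i) = some v := by
  obtain ⟨m, v, h⟩ := hC.exists_output (e := fun _ => .step i) hW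
    (Frequently.of_forall fun _ => rfl) (Eventually.of_forall fun _ => by simp)
  refine ⟨m, v, ?_⟩
  simpa [initSeg, List.map_const'] using h

lemma recWaitFree_of_rank (rank : ∀ i, A.PState i → ℕ)
    (h : ∀ i st, A.output i st = none → ∃ o a, A.pending i st = some ⟨o, a⟩ ∧
      ∀ resp, rank i (A.next i st o resp) < rank i st) : RecWaitFree A := by
  intro input C e i _ hstep hcrash
  by_contra! hnone
  let D (k : ℕ) := run A input C (initSeg e k)
  have rank_lt (k : ℕ) (hk : e k = .step i) :
      rank i ((D (k + 1)).pstate i) < rank i ((D k).pstate i) := by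
    classical
    obtain ⟨o, a, hp, hlt⟩ := h i _ (Option.eq_none_iff_forall_ne_some.2 (hnone k))
    simp only [D, run_initSeg_succ, hk, step_of_pending_eq_some hp, Function.update_self]
    exact hlt _
  have rank_le : ∀ᶠ k in atTop, rank i ((D (k + 1)).pstate i) ≤ rank i ((D k).pstate i) := by
    filter_upwards [eventually_atTop.2 hcrash] with k hk
    by_cases hi : e k = .step i
    · exact (rank_lt k hi).le
    · refine (congrArg _ ?_).le
      simp only [D, run_initSeg_succ]
      rcases he : e k with j | j
      · exact step_pstate_of_ne fun hj => hi (hj ▸ he)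
      · exact crash_pstate_of_ne fun hj => hk (hj ▸ he)
  obtain ⟨k, hk, heq⟩ := ((frequently_atTop.2 hstep).and_eventually
    (eventually_succ_eq_of_eventually_succ_le
    (f := fun k => rank i ((D k).pstate i)) rank_le)).exists
  exact (rank_lt k hk).ne heq

end Executions

section Valence

variable {N : ℕ} {A : Algorithm N} {input : Fin N → Bool} {p₀ : Fin N}
  {C D : Config A} {S T : Config A × ℕ} {b b' : ℕ} {i : Fin N} {v w : Bool}

/-- The crash budget: `Affords p₀ b b' e` says that with budget `b` the event `e` may happen and
leave budget `b'`. The process `p₀` never crashes, each of its steps resets the budget to an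
arbitrary value, and every crash of another process uses up some of the budget. -/
def Affords (p₀ : Fin N) (b b' : ℕ) : Event N → Prop
  | .step i => i ≠ p₀ → b' ≤ b
  | .crash i => i ≠ p₀ ∧ b' < b

lemma Affords.mono {c : ℕ} {e : Event N} (h : Affords p₀ b b' e) (hbc : b ≤ c) :
    Affords p₀ c b' e := by
  cases e with
  | step i => exact fun hi => (h hi).trans hbc
  | crash i => exact ⟨h.1, h.2.trans_le hbc⟩

lemma exists_frequently_step {e : ℕ → Event N} {b : ℕ → ℕ}
    (h : ∀ k, Affords p₀ (b k) (b (k + 1)) (e k)) :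
    ∃ i, (∃ᶠ k in atTop, e k = .step i) ∧ ∀ᶠ k in atTop, e k ≠ .crash i := by
  by_contra! hcon
  have not_crash_p₀ (k : ℕ) : e k ≠ .crash p₀ := fun hk => by
    have := h k
    rw [hk] at this
    exact this.1 rfl
  have not_step_p₀ : ∀ᶠ k in atTop, e k ≠ .step p₀ :=
    not_frequently.1 fun hp => hcon p₀ hp (.of_forall not_crash_p₀)
  have budget_antitone : ∀ᶠ k in atTop, b (k + 1) ≤ b k := by
    filter_upwards [not_step_p₀] with k hk
    have := h k
    rcases he : e k with i | i <;> rw [he] at this hk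
    · exact this fun hi => hk (hi ▸ rfl)
    · exact this.2.le
  have not_crash : ∀ᶠ k in atTop, ∀ i, e k ≠ .crash i := by
    filter_upwards [eventually_succ_eq_of_eventually_succ_le budget_antitone] with k hk i hi
    have := h k
    rw [hi, hk] at this
    exact this.2.false
  have not_step : ∀ᶠ k in atTop, ∀ i, e k ≠ .step i :=
    eventually_all.2 fun i => not_frequently.1 fun hi =>
      hcon i hi (not_crash.mono fun _ hk => hk i)
  obtain ⟨k, hc, hs⟩ := (not_crash.and not_step).exists
  rcases he : e k with i | i
  · exact hs i he
  · exact hc i he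

/-- An event that the crash budget allows, on configurations paired with the current budget. -/
def Move (input : Fin N → Bool) (p₀ : Fin N) (S T : Config A × ℕ) : Prop :=
  ∃ e, Affords p₀ S.2 T.2 e ∧ applyEvent A input S.1 e = T.1

lemma Move.step (h : i ≠ p₀ → b' ≤ b) :
    Move input p₀ (C, b) (applyEvent A input C (.step i), b') :=
  ⟨.step i, h, rfl⟩

lemma Move.crash (hi : i ≠ p₀) (hb : b' < b) :
    Move input p₀ (C, b) (applyEvent A input C (.crash i), b') :=
  ⟨.crash i, ⟨hi, hb⟩, rfl⟩

lemma reflTransGen_move_steps (l : List (Fin N)) (h : p₀ ∉ l → b' = b) :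
    ReflTransGen (Move input p₀) (C, b) (run A input C (l.map .step), b') := by
  induction l generalizing C b with
  | nil => exact h (by simp) ▸ .refl
  | cons i l ih =>
    obtain rfl | hi := eq_or_ne i p₀
    · exact .head (.step (b' := b') (absurd rfl)) (ih fun _ => rfl)
    · exact .head (.step fun _ => le_rfl) (ih fun hl => h (by simp [hi.symm, hl]))

lemma exists_run_of_reflTransGen_move (h : ReflTransGen (Move input p₀) S T) :
    ∃ σ, run A input S.1 σ = T.1 := by
  induction h with
  | refl => exact ⟨[], rfl⟩
  | tail _ h ih =>
    obtain ⟨σ, hσ⟩ := ih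
    obtain ⟨e, -, he⟩ := h
    exact ⟨σ ++ [e], by rw [run_append, hσ, ← he]; rfl⟩

/-- Some execution from `S` within the crash budget leads to a decision for `v`. -/
def CanDecide (input : Fin N → Bool) (p₀ : Fin N) (S : Config A × ℕ) (v : Bool) : Prop :=
  ∃ T, ReflTransGen (Move input p₀) S T ∧ ∃ i, A.output i (T.1.pstate i) = some v

lemma CanDecide.of_reflTransGen (hST : ReflTransGen (Move input p₀) S T)
    (h : CanDecide input p₀ T v) : CanDecide input p₀ S v := by
  obtain ⟨U, hU, hv⟩ := h
  exact ⟨U, hST.trans hU, hv⟩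

lemma CanDecide.mono (h : CanDecide input p₀ (C, b) v) (hb : b ≤ b') :
    CanDecide input p₀ (C, b') v := by
  obtain ⟨U, hU, hv⟩ := h
  obtain rfl | ⟨T, ⟨e, he, hT⟩, hTU⟩ := hU.cases_head
  · exact ⟨_, .refl, hv⟩
  · exact ⟨U, .head ⟨e, he.mono hb, hT⟩ hTU, hv⟩

lemma Reachable.move (h : Reachable A input S.1) (hST : Move input p₀ S T) :
    Reachable A input T.1 := by
  obtain ⟨e, -, he⟩ := hST
  exact he ▸ h.applyEvent e

lemma Reachable.exists_canDecide (hC : Reachable A input C) (hW : RecWaitFree A) (b : ℕ) :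
    ∃ v, CanDecide input p₀ (C, b) v := by
  obtain ⟨m, v, h⟩ := hC.exists_solo_output hW p₀
  rw [← List.map_replicate] at h
  exact ⟨v, _, reflTransGen_move_steps (b' := b) _ fun _ => rfl, p₀, h⟩

/-- Two configurations from which the same value can be decided. -/
def Compatible (input : Fin N → Bool) (p₀ : Fin N) (S T : Config A × ℕ) : Prop :=
  ∃ v, CanDecide input p₀ S v ∧ CanDecide input p₀ T v

lemma Compatible.of_reflTransGen {S' T' : Config A × ℕ} (h : Compatible input p₀ S' T')
    (hS : ReflTransGen (Move input p₀) S S') (hT : ReflTransGen (Move input p₀) T T') :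
    Compatible input p₀ S T :=
  let ⟨v, hv⟩ := h
  ⟨v, hv.1.of_reflTransGen hS, hv.2.of_reflTransGen hT⟩

lemma Indist.compatible {r : Fin N} (h : Indist r C D) (hW : RecWaitFree A)
    (hC : Reachable A input C) (b b' : ℕ) : Compatible input p₀ (C, b) (D, b') := by
  obtain ⟨m, v, hv⟩ := hC.exists_solo_output hW r
  have hv' := hv
  rw [(h.run_replicate_step m (input' := input)).pstate] at hv'
  rw [← List.map_replicate] at hv hv'
  exact ⟨v, ⟨_, reflTransGen_move_steps (b' := b) _ fun _ => rfl, r, hv⟩,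
    ⟨_, reflTransGen_move_steps (b' := b') _ fun _ => rfl, r, hv'⟩⟩

/-- Both values can still be decided. -/
def Bivalent (input : Fin N → Bool) (p₀ : Fin N) (S : Config A × ℕ) : Prop :=
  ∀ v, CanDecide input p₀ S v

lemma Bivalent.output_eq_none (hS : Bivalent input p₀ S) (hA : Agreement A)
    (hC : Reachable A input S.1) (i : Fin N) : A.output i (S.1.pstate i) = none := by
  rw [Option.eq_none_iff_forall_ne_some]
  intro v hv
  obtain ⟨T, hT, j, hj⟩ := hS (!v)
  obtain ⟨σ, hσ⟩ := exists_run_of_reflTransGen_move hT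
  exact absurd (hC.output_agree hA hv (hσ ▸ hj)) (by simp)

lemma CanDecide.bivalent (hv : CanDecide input p₀ S v) (hw : CanDecide input p₀ S w)
    (h : v ≠ w) : Bivalent input p₀ S := by
  intro x
  have eq_or_eq : ∀ v w x : Bool, v ≠ w → x = v ∨ x = w := by decide
  obtain rfl | rfl := eq_or_eq v w x h
  exacts [hv, hw]

/-- A process `r` running alone decides its own input, as it cannot tell whether the other inputs
are all equal to its own. -/
lemma exists_bivalent_initConfig (hV : Validity A) (hW : RecWaitFree A) {p₁ : Fin N}
    (h : p₁ ≠ p₀) (b : ℕ) : ∃ input, Bivalent input p₀ (initConfig A input, b) := by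
  have canDecide_input (input : Fin N → Bool) (r : Fin N) :
      CanDecide input p₀ (initConfig A input, b) (input r) := by
    have hind : Indist r (initConfig A fun _ => input r) (initConfig A input) := ⟨rfl, rfl⟩
    obtain ⟨m, v, hv⟩ := Reachable.initConfig.exists_solo_output hW r
    obtain ⟨_, rfl⟩ := hV _ _ r v ⟨_, List.prefix_rfl, hv⟩
    rw [(hind.run_replicate_step m (input' := input)).pstate, ← List.map_replicate] at hv
    exact ⟨_, reflTransGen_move_steps (b' := b) _ fun _ => rfl, r, hv⟩
  refine ⟨fun i => decide (i ≠ p₀), ?_⟩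
  exact (canDecide_input _ p₀).bivalent (canDecide_input _ p₁) (by simp [h])

/-- A bivalent configuration all of whose successors within the crash budget are univalent. -/
structure IsCritical (input : Fin N → Bool) (p₀ : Fin N) (S : Config A × ℕ) : Prop where
  reachable : Reachable A input S.1
  bivalent : Bivalent input p₀ S
  not_bivalent : ∀ T, Move input p₀ S T → ¬ Bivalent input p₀ T

lemma exists_output_of_move {S : ℕ → Config A × ℕ} (hW : RecWaitFree A)
    (h0 : Reachable A input (S 0).1) (hS : ∀ k, Move input p₀ (S k) (S (k + 1))) :
    ∃ k i, A.output i ((S k).1.pstate i) ≠ none := by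
  choose e he hSe using hS
  have hrun (k : ℕ) : run A input (S 0).1 (initSeg e k) = (S k).1 := by
    induction k with
    | zero => rfl
    | succ k ih => rw [run_initSeg_succ, ih, hSe]
  obtain ⟨i, hstep, hcrash⟩ := exists_frequently_step he
  obtain ⟨k, v, hk⟩ := h0.exists_output hW hstep hcrash
  rw [hrun] at hk
  exact ⟨k, i, by simp [hk]⟩

lemma wellFounded_undecided_move (hW : RecWaitFree A) :
    WellFounded fun T S : Config A × ℕ => Move input p₀ S T ∧ Reachable A input S.1 ∧
      ∀ i, A.output i (S.1.pstate i) = none := by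
  rw [wellFounded_iff_isEmpty_descending_chain]
  refine ⟨fun ⟨S, hS⟩ => ?_⟩
  obtain ⟨k, i, hk⟩ := exists_output_of_move hW (hS 0).2.1 fun k => (hS k).1
  exact hk ((hS k).2.2 i)

lemma Bivalent.exists_isCritical (hS : Bivalent input p₀ S) (hA : Agreement A)
    (hW : RecWaitFree A) (hC : Reachable A input S.1) :
    ∃ T : Config A × ℕ, IsCritical input p₀ T := by
  obtain ⟨T, ⟨hTr, hTb⟩, hmin⟩ := (wellFounded_undecided_move hW).has_min
    {T : Config A × ℕ | Reachable A input T.1 ∧ Bivalent input p₀ T} ⟨S, hC, hS⟩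
  exact ⟨T, hTr, hTb, fun U hTU hU =>
    hmin U ⟨hTr.move hTU, hU⟩ ⟨hTU, hTr, hTb.output_eq_none hA hTr⟩⟩

/-- The critical configuration of the valence argument: the step of process `i` out of `C` forces
the decision `team i`, and both decisions are forced by some step. -/
structure TeamSplit (input : Fin N → Bool) (p₀ : Fin N) (C : Config A) (team : Fin N → Bool) :
    Prop where
  reachable : Reachable A input C
  not_canDecide : ∀ i b, (i ≠ p₀ → b = 0) →
    ¬ CanDecide input p₀ (applyEvent A input C (.step i), b) (!team i)
  exists_ne : ∃ q, team q ≠ team p₀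

lemma IsCritical.eq_of_canDecide (h : IsCritical input p₀ S) (hST : Move input p₀ S T)
    (hv : CanDecide input p₀ T v) (hw : CanDecide input p₀ T w) : v = w :=
  by_contra fun hvw => h.not_bivalent T hST (hv.bivalent hw hvw)

/-- Crashing a process commutes with a step of `p₀`, and that step pays for the crash, so it must
be a step that forces the decision opposite to that of `p₀`. -/
lemma IsCritical.exists_step_of_canDecide (h : IsCritical input p₀ (C, b)) (hA : Agreement A)
    (hW : RecWaitFree A)
    (hv : CanDecide input p₀ (applyEvent A input C (.step p₀), 0) v) :
    ∃ q, ∃ b' ≤ b, CanDecide input p₀ (applyEvent A input C (.step q), b') (!v) := by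
  obtain ⟨T, hT, i, hi⟩ := h.bivalent (!v)
  obtain rfl | ⟨⟨D, b'⟩, ⟨e, he, rfl⟩, hDT⟩ := hT.cases_head
  · simp [h.bivalent.output_eq_none hA h.reachable i] at hi
  have hv' : CanDecide input p₀ (applyEvent A input C e, b') (!v) := ⟨T, hDT, i, hi⟩
  rcases e with q | q
  · have hq : q ≠ p₀ := by
      rintro rfl
      exact absurd (h.eq_of_canDecide (.step (absurd rfl)) (hv.mono b'.zero_le) hv') (by simp)
    exact ⟨q, b', he hq, hv'⟩
  · exfalso
    obtain ⟨hq, hb'⟩ := he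
    obtain ⟨w, hw⟩ := ((h.reachable.applyEvent (.crash q)).applyEvent (.step p₀)).exists_canDecide
      (p₀ := p₀) hW 0
    have crash_first : CanDecide input p₀ (applyEvent A input C (.crash q), b') w :=
      hw.of_reflTransGen (.single (.step (absurd rfl)))
    have step_first : CanDecide input p₀ (applyEvent A input C (.step p₀), 1) w := by
      rw [crash_step_comm hq] at hw
      exact hw.of_reflTransGen (.single (.crash hq one_pos))
    have hw_not : w = !v := h.eq_of_canDecide (.crash hq hb') crash_first hv'
    have hw_eq : w = v := h.eq_of_canDecide (.step (absurd rfl)) step_first (hv.mono zero_le_one)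
    exact absurd (hw_eq.symm.trans hw_not) (by simp)

theorem IsCritical.exists_teamSplit (h : IsCritical input p₀ (C, b)) (hA : Agreement A)
    (hW : RecWaitFree A) : ∃ team, TeamSplit input p₀ C team := by
  choose team hteam using fun i =>
    (h.reachable.applyEvent (.step i)).exists_canDecide (p₀ := p₀) hW 0
  have unique {i c v} (hc : i ≠ p₀ → c ≤ b)
      (hv : CanDecide input p₀ (applyEvent A input C (.step i), c) v) : v = team i :=
    h.eq_of_canDecide (.step hc) hv ((hteam i).mono c.zero_le)
  obtain ⟨q, c, hc, hqv⟩ := h.exists_step_of_canDecide hA hW (hteam p₀)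
  refine ⟨team, h.reachable, fun i c hc hi => ?_, q, ?_⟩
  · simpa using unique (fun hip => hc hip ▸ b.zero_le) hi
  · simp [← unique (fun _ => hc) hqv]

theorem exists_teamSplit (hA : Agreement A) (hV : Validity A) (hW : RecWaitFree A)
    {p₁ : Fin N} (h : p₁ ≠ p₀) : ∃ input, ∃ C : Config A, ∃ team, TeamSplit input p₀ C team := by
  obtain ⟨input, hb⟩ := exists_bivalent_initConfig hV hW h 0
  obtain ⟨⟨C, b⟩, hC⟩ := hb.exists_isCritical hA hW .initConfig
  exact ⟨input, C, hC.exists_teamSplit hA hW⟩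

lemma TeamSplit.not_compatible {team : Fin N → Bool} {j : Fin N} (h : TeamSplit input p₀ C team)
    (hij : team i ≠ team j) (hb : i ≠ p₀ → b = 0) (hb' : j ≠ p₀ → b' = 0)
    (hS : ReflTransGen (Move input p₀) (applyEvent A input C (.step i), b) S)
    (hT : ReflTransGen (Move input p₀) (applyEvent A input C (.step j), b') T) :
    ¬ Compatible input p₀ S T := by
  rintro ⟨v, hv, hw⟩
  have eq_not_or_eq_not : ∀ v x y : Bool, x ≠ y → v = !x ∨ v = !y := by decide
  obtain rfl | rfl := eq_not_or_eq_not v _ _ hij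
  · exact h.not_canDecide i b hb (hv.of_reflTransGen hS)
  · exact h.not_canDecide j b' hb' (hw.of_reflTransGen hT)

end Valence

/-- The operations `a` and `b`, pending on an object with value `u`, can decide a race: the final
value depends on their order, and each of them notices whether the other one came first. -/
structure Conflict (T : DetType) (u : T.Value) (a b : T.Op) : Prop where
  value_ne : (T.δ (T.δ u a).2 b).2 ≠ (T.δ (T.δ u b).2 a).2
  right_notices : T.δ (T.δ u a).2 b ≠ T.δ u b
  left_notices : T.δ (T.δ u b).2 a ≠ T.δ u a

lemma Conflict.symm {T : DetType} {u : T.Value} {a b : T.Op} (h : Conflict T u a b) :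
    Conflict T u b a :=
  ⟨h.value_ne.symm, h.left_notices, h.right_notices⟩

/-- The values `u` and `w` cannot be told apart by a process that loses its memory after each
access that reveals a difference: finitely many such accesses make the values equal. -/
inductive CrashIndist (T : DetType) : T.Value → T.Value → Prop
  | intro {u w : T.Value}
    (h : ∀ a, T.δ u a ≠ T.δ w a → CrashIndist T (T.δ u a).2 (T.δ w a).2) : CrashIndist T u w

lemma CrashIndist.refl {T : DetType} (u : T.Value) : CrashIndist T u u :=
  .intro fun _ h => absurd rfl h

/-- Every process takes one step, `i` first. -/
def firstSched {N : ℕ} (i : Fin N) : List (Fin N) := i :: (List.finRange N).erase i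

lemma nodup_firstSched {N : ℕ} (i : Fin N) : (firstSched i).Nodup :=
  List.nodup_cons.2 ⟨(List.nodup_finRange N).not_mem_erase, (List.nodup_finRange N).erase i⟩

lemma length_firstSched {N : ℕ} (i : Fin N) : (firstSched i).length = N := by
  rw [firstSched, (List.perm_cons_erase (List.mem_finRange i)).symm.length_eq,
    List.length_finRange]

/-- Whenever the operations of opposite teams conflict, letting each of the `N` processes apply its
operation once conceals which team went first from a process that crashes often enough. -/
def ConcealsFirst (T : DetType) (N : ℕ) : Prop :=
  ∀ (u : T.Value) (ops : Fin N → T.Op) (team : Fin N → Bool),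
    (∀ i j, team i ≠ team j → Conflict T u (ops i) (ops j)) →
    ∀ i j, team i ≠ team j →
      CrashIndist T (applyOps T ops u (firstSched i)) (applyOps T ops u (firstSched j))

lemma not_conflict_of_isRegister {T : DetType} (hT : IsRegister T) (u : T.Value) (a b : T.Op) :
    ¬ Conflict T u a b := by
  obtain ⟨V, rfl⟩ := hT
  rintro ⟨-, hb, ha⟩
  rcases a with _ | v
  · exact hb rfl
  · rcases b with _ | w
    · exact ha rfl
    · exact hb rfl

lemma concealsFirst_of_isRegister {T : DetType} (hT : IsRegister T) (N : ℕ) :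
    ConcealsFirst T N :=
  fun _ _ _ h i j hij => (not_conflict_of_isRegister hT _ _ _ (h i j hij)).elim

section TType

variable {n n' : ℕ} {hn : 2 ≤ n}

/-- The number of updates that led from `s` to a given value of `𝒯_{n,n'}`, counted up to `n`. -/
def TVal.updates : TVal n → ℕ
  | .s => 0
  | .mid _ k => k + 1
  | .bot => n

lemma TVal.eq_bot_of_le_updates {v : TVal n} (hn : 0 < n) (h : n ≤ v.updates) : v = .bot := by
  rcases v with _ | _ | ⟨x, k⟩
  · exact absurd h hn.not_ge
  · rfl
  · have : (k : ℕ) + 1 < n := by omega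
    exact absurd h this.not_ge

lemma TVal.updates_le (v : TVal n) : v.updates ≤ n := by
  rcases v with _ | _ | ⟨_, k⟩
  · exact n.zero_le
  · exact le_rfl
  · exact Nat.lt_of_lt_pred k.isLt

lemma updates_update (v : TVal n) {a : TOp} (ha : a ≠ .opR) :
    TVal.updates ((TType n n' hn).δ v a).2 = min (v.updates + 1) n := by
  rcases v with _ | _ | ⟨x, k⟩ <;> rcases a with _ | _ | _ <;>
    first
    | exact absurd rfl ha
    | simp only [TType, TVal.updates]
      grind [TVal.updates]

lemma read_of_updates_le {v : TVal n} (h : v.updates ≤ n') (hlt : v.updates < n) :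
    (TType n n' hn).δ v .opR = (.val v, v) := by
  rcases v with _ | _ | ⟨x, k⟩
  · rfl
  · exact absurd hlt (lt_irrefl _)
  · exact if_pos h

lemma read_of_lt_updates {v : TVal n} (h : n' < v.updates) :
    (TType n n' hn).δ v .opR = (.botR, .bot) := by
  rcases v with _ | _ | ⟨x, k⟩
  · exact absurd h (Nat.not_lt_zero _)
  · rfl
  · exact if_neg h.not_ge

lemma update_eq_update {v : TVal n} (hv : v ≠ .s) {a b : TOp} (ha : a ≠ .opR) (hb : b ≠ .opR) :
    (TType n n' hn).δ v a = (TType n n' hn).δ v b := by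
  rcases v with _ | _ | ⟨x, k⟩ <;> rcases a with _ | _ | _ <;> rcases b with _ | _ | _ <;>
    first | rfl | contradiction

lemma updates_le_updates_apply (v : TVal n) (a : TOp) :
    v.updates ≤ TVal.updates ((TType n n' hn).δ v a).2 := by
  rcases v with _ | _ | ⟨x, k⟩ <;> rcases a with _ | _ | _ <;> simp only [TType] <;>
    grind [TVal.updates]

lemma update_ne_s (v : TVal n) {a : TOp} (ha : a ≠ .opR) : ((TType n n' hn).δ v a).2 ≠ .s := by
  intro h
  have := updates_update (n' := n') (hn := hn) v ha
  rw [h, TVal.updates] at this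
  omega

lemma Conflict.left_ne_opR {u : TVal n} {a b : TOp} (h : Conflict (TType n n' hn) u a b) :
    a ≠ .opR := by
  rintro rfl
  obtain hle | hlt := le_or_gt u.updates n'
  · obtain hu | hu := lt_or_ge u.updates n
    · exact h.right_notices (by rw [read_of_updates_le hle hu])
    · obtain rfl := TVal.eq_bot_of_le_updates (by omega) hu
      exact h.right_notices rfl
  · refine h.value_ne ?_
    rw [read_of_lt_updates hlt, read_of_lt_updates (hlt.trans_le (updates_le_updates_apply u b))]
    rfl

lemma Conflict.value_eq_s {u : TVal n} {a b : TOp} (h : Conflict (TType n n' hn) u a b) :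
    u = .s := by
  by_contra hu
  have ha := h.left_ne_opR
  have hb := h.symm.left_ne_opR
  apply h.value_ne
  rw [update_eq_update hu ha hb, update_eq_update (update_ne_s u hb) hb ha]

/-- Only a read can tell apart two values with the same number of updates, and beyond `n'` updates
a read makes both values equal to `s_⊥`. -/
lemma crashIndist_of_updates_eq {v w : TVal n} (hvw : v.updates = w.updates)
    (h : n' < v.updates ∨ n ≤ v.updates) : CrashIndist (TType n n' hn) v w := by
  induction hm : n - v.updates generalizing v w with
  | zero =>
    have hv : v = .bot := TVal.eq_bot_of_le_updates (by omega) (by omega)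
    have hw : w = .bot := TVal.eq_bot_of_le_updates (by omega) (by omega)
    exact hv ▸ hw ▸ .refl _
  | succ m ih =>
    have hlt : n' < v.updates := by omega
    refine .intro fun a hne => ?_
    have ha : a ≠ .opR := by
      rintro rfl
      exact hne (by rw [read_of_lt_updates hlt, read_of_lt_updates (hvw ▸ hlt)])
    have hv := updates_update (n' := n') (hn := hn) v ha
    have hw := updates_update (n' := n') (hn := hn) w ha
    exact ih (by omega) (by omega) (by omega)

lemma updates_applyOps {N : ℕ} {ops : Fin N → TOp} (hops : ∀ i, ops i ≠ .opR) (u : TVal n)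
    (l : List (Fin N)) :
    TVal.updates (applyOps (TType n n' hn) ops u l) = min (u.updates + l.length) n := by
  induction l generalizing u with
  | nil => exact (min_eq_left u.updates_le).symm
  | cons i l ih =>
    refine (ih _).trans ?_
    rw [updates_update u (hops i), List.length_cons]
    omega

lemma concealsFirst_TType {N : ℕ} (h : n' < N ∨ n ≤ N) : ConcealsFirst (TType n n' hn) N := by
  intro u ops team hconf i j hij
  have hops (k : Fin N) : ops k ≠ .opR := by
    obtain hk | hk := ne_or_eq (team k) (team i)
    · exact (hconf k i hk).left_ne_opR
    · exact (hconf k j (hk ▸ hij)).left_ne_opR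
  obtain rfl := (hconf i j hij).value_eq_s
  have hupdates (k : Fin N) :
      TVal.updates (applyOps (TType n n' hn) ops .s (firstSched k)) = min N n := by
    rw [updates_applyOps hops, length_firstSched, TVal.updates, zero_add]
  refine crashIndist_of_updates_eq ((hupdates i).trans (hupdates j).symm) ?_
  rw [hupdates]
  omega

end TType

section Impossibility

variable {N : ℕ} {A : Algorithm N} {input : Fin N → Bool} {p₀ q r : Fin N} {C D : Config A}
  {team : Fin N → Bool} {O : A.ObjIdx}

lemma TeamSplit.oval_step_step_ne (h : TeamSplit input p₀ C team) (hW : RecWaitFree A)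
    (hrq : team r ≠ team q) :
    (applyEvent A input (applyEvent A input C (.step r)) (.step q)).oval ≠
      (applyEvent A input (applyEvent A input C (.step q)) (.step r)).oval := by
  intro heq
  have hne : r ≠ q := ne_of_apply_ne team hrq
  wlog hq : q ≠ p₀ generalizing r q
  · exact this hrq.symm heq.symm hne.symm (not_not.1 hq ▸ hne)
  have hreach := (h.reachable.applyEvent (.step r)).applyEvent (.step q)
  obtain rfl | hr := eq_or_ne r p₀
  · have hind : Indist q
        (applyEvent A input (applyEvent A input (applyEvent A input C (.step r)) (.step q))
          (.crash q))
        (applyEvent A input (applyEvent A input (applyEvent A input C (.step q)) (.step r))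
          (.crash q)) :=
      ⟨by rw [crash_pstate_self, crash_pstate_self], heq⟩
    exact h.not_compatible hrq (b := 1) (b' := 0) (absurd rfl) (fun _ => rfl)
      (.head (.step fun _ => le_rfl) (.single (.crash hq one_pos)))
      (.head (.step (absurd rfl)) (.single (.crash hq one_pos)))
      (hind.compatible hW (hreach.applyEvent _) 0 0)
  · have hind : Indist p₀ (applyEvent A input (applyEvent A input C (.step r)) (.step q))
        (applyEvent A input (applyEvent A input C (.step q)) (.step r)) :=
      ⟨by rw [step_pstate_of_ne hq.symm, step_pstate_of_ne hr.symm, step_pstate_of_ne hr.symm,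
        step_pstate_of_ne hq.symm], heq⟩
    exact h.not_compatible hrq (fun _ => rfl) (fun _ => rfl)
      (.single (.step fun _ => le_rfl)) (.single (.step fun _ => le_rfl))
      (hind.compatible hW hreach 0 0)

lemma TeamSplit.not_indist (h : TeamSplit input p₀ C team) (hW : RecWaitFree A)
    (hrq : team r ≠ team q) :
    ¬ Indist q (applyEvent A input (applyEvent A input C (.step r)) (.step q))
      (applyEvent A input C (.step q)) := fun hind =>
  h.not_compatible hrq (fun _ => rfl) (fun _ => rfl) (.single (.step fun _ => le_rfl)) .refl
    (hind.compatible hW ((h.reachable.applyEvent _).applyEvent _) 0 0)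

lemma TeamSplit.exists_team_ne (h : TeamSplit input p₀ C team) (i : Fin N) :
    ∃ j, team i ≠ team j := by
  obtain ⟨q, hq⟩ := h.exists_ne
  obtain hi | hi := ne_or_eq (team i) (team q)
  exacts [⟨q, hi⟩, ⟨p₀, hi ▸ hq⟩]

lemma TeamSplit.exists_pending (h : TeamSplit input p₀ C team) (hW : RecWaitFree A) (i : Fin N) :
    ∃ o a, A.pending i (C.pstate i) = some ⟨o, a⟩ := by
  obtain ⟨j, hij⟩ := h.exists_team_ne i
  rcases hp : A.pending i (C.pstate i) with _ | ⟨o, a⟩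
  · have hind := h.not_indist hW hij
    rw [step_of_pending_eq_none hp] at hind
    exact absurd ⟨rfl, rfl⟩ hind
  · exact ⟨o, a, rfl⟩

lemma TeamSplit.object_eq (h : TeamSplit input p₀ C team) (hW : RecWaitFree A)
    (hrq : team r ≠ team q) {o o' : A.ObjIdx} {a : (A.objType o).Op} {b : (A.objType o').Op}
    (hr : A.pending r (C.pstate r) = some ⟨o, a⟩) (hq : A.pending q (C.pstate q) = some ⟨o', b⟩) :
    o = o' := by
  classical
  by_contra ho
  have hne : r ≠ q := ne_of_apply_ne team hrq
  apply h.oval_step_step_ne hW hrq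
  rw [step_oval ((congrArg _ (step_pstate_of_ne hne.symm)).trans hq), step_oval hr,
    step_oval ((congrArg _ (step_pstate_of_ne hne)).trans hr), step_oval hq,
    Function.update_of_ne (Ne.symm ho), Function.update_of_ne ho, Function.update_comm ho]

lemma TeamSplit.conflict (h : TeamSplit input p₀ C team) (hW : RecWaitFree A)
    {ops : Fin N → (A.objType O).Op}
    (hops : ∀ i, A.pending i (C.pstate i) = some ⟨O, ops i⟩) (hrq : team r ≠ team q) :
    Conflict (A.objType O) (C.oval O) (ops r) (ops q) := by
  classical
  have pending_step {i j} (hij : team i ≠ team j) :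
      A.pending j ((applyEvent A input C (.step i)).pstate j) = some ⟨O, ops j⟩ :=
    (congrArg _ (step_pstate_of_ne (ne_of_apply_ne team hij.symm))).trans (hops j)
  have notices {i j} (hij : team i ≠ team j) :
      (A.objType O).δ ((A.objType O).δ (C.oval O) (ops i)).2 (ops j) ≠
        (A.objType O).δ (C.oval O) (ops j) := by
    intro heq
    apply h.not_indist hW hij
    rw [step_of_pending_eq_some (pending_step hij), step_of_pending_eq_some (hops i),
      step_of_pending_eq_some (hops j)]
    have hne : j ≠ i := ne_of_apply_ne team hij.symm
    exact ⟨by simp [hne, heq], by simp [heq]⟩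
  refine ⟨fun heq => h.oval_step_step_ne hW hrq ?_, notices hrq, notices hrq.symm⟩
  rw [step_oval (pending_step hrq), step_oval (hops r), step_oval (pending_step hrq.symm),
    step_oval (hops q)]
  simp [heq]

theorem TeamSplit.exists_conflict (h : TeamSplit input p₀ C team) (hW : RecWaitFree A) :
    ∃ O, ∃ ops : Fin N → (A.objType O).Op,
      (∀ i, A.pending i (C.pstate i) = some ⟨O, ops i⟩) ∧
      ∀ i j, team i ≠ team j → Conflict (A.objType O) (C.oval O) (ops i) (ops j) := by
  choose obj ops hops using h.exists_pending hW
  have obj_eq (i : Fin N) : obj i = obj p₀ := by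
    obtain ⟨q, hq⟩ := h.exists_ne
    obtain hi | hi := ne_or_eq (team i) (team p₀)
    · exact h.object_eq hW hi (hops i) (hops p₀)
    · exact (h.object_eq hW (hi ▸ hq.symm) (hops i) (hops q)).trans
        (h.object_eq hW hq (hops q) (hops p₀))
  have hpending (i : Fin N) : ∃ a, A.pending i (C.pstate i) = some ⟨obj p₀, a⟩ :=
    obj_eq i ▸ ⟨ops i, hops i⟩
  choose ops' hops' using hpending
  exact ⟨obj p₀, ops', hops', fun _ _ hij => h.conflict hW hops' hij⟩

/-- The process `q` cannot tell the configurations `C` and `D` apart without accessing the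
object `O`. -/
structure IndistOff (O : A.ObjIdx) (q : Fin N) (C D : Config A) : Prop where
  pstate : C.pstate q = D.pstate q
  oval : ∀ o ≠ O, C.oval o = D.oval o

lemma IndistOff.step_of_ne (h : IndistOff O q C D) {o : A.ObjIdx} {a : (A.objType o).Op}
    (hp : A.pending q (C.pstate q) = some ⟨o, a⟩) (ho : o ≠ O) :
    IndistOff O q (applyEvent A input C (.step q)) (applyEvent A input D (.step q)) := by
  classical
  rw [step_of_pending_eq_some hp, step_of_pending_eq_some (h.pstate ▸ hp)]
  refine ⟨by simp [h.pstate, h.oval o ho], fun o' ho' => ?_⟩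
  obtain rfl | hoo' := eq_or_ne o' o
  · simp [h.oval o' ho]
  · simp [hoo', h.oval o' ho']

lemma IndistOff.step_of_eq (h : IndistOff O q C D) {a : (A.objType O).Op}
    (hp : A.pending q (C.pstate q) = some ⟨O, a⟩)
    (ha : (A.objType O).δ (C.oval O) a = (A.objType O).δ (D.oval O) a) :
    Indist q (applyEvent A input C (.step q)) (applyEvent A input D (.step q)) := by
  classical
  rw [step_of_pending_eq_some hp, step_of_pending_eq_some (h.pstate ▸ hp)]
  refine ⟨by simp [h.pstate, ha], funext fun o => ?_⟩
  obtain rfl | ho := eq_or_ne o O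
  · simp [ha]
  · simp [ho, h.oval o ho]

lemma IndistOff.step_crash (h : IndistOff O q C D) {a : (A.objType O).Op}
    (hp : A.pending q (C.pstate q) = some ⟨O, a⟩) :
    IndistOff O q (applyEvent A input (applyEvent A input C (.step q)) (.crash q))
      (applyEvent A input (applyEvent A input D (.step q)) (.crash q)) := by
  classical
  refine ⟨by rw [crash_pstate_self, crash_pstate_self], fun o ho => ?_⟩
  rw [crash_oval, crash_oval, step_oval hp, step_oval (h.pstate ▸ hp),
    Function.update_of_ne ho, Function.update_of_ne ho, h.oval o ho]

/-- Let `q` run alone and crash whenever the response of `O` tells the two executions apart. -/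
theorem CrashIndist.exists_compatible {u w : (A.objType O).Value}
    (huw : CrashIndist (A.objType O) u w) (hW : RecWaitFree A) (hq : q ≠ p₀)
    (hC : Reachable A input C) (h : IndistOff O q C D) (hu : C.oval O = u) (hw : D.oval O = w) :
    ∃ b, Compatible input p₀ (C, b) (D, b) := by
  classical
  induction huw generalizing C D with
  | intro hδ ihO =>
    subst hu hw
    clear hδ
    obtain ⟨m, v, hm⟩ := hC.exists_solo_output hW q
    induction m generalizing C D with
    | zero => exact ⟨0, v, ⟨_, .refl, q, hm⟩, ⟨_, .refl, q, h.pstate ▸ hm⟩⟩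
    | succ m ih =>
      have lift {b} (hb : Compatible input p₀ (applyEvent A input C (.step q), b)
          (applyEvent A input D (.step q), b)) : ∃ b, Compatible input p₀ (C, b) (D, b) :=
        ⟨b, hb.of_reflTransGen (.single (.step fun _ => le_rfl)) (.single (.step fun _ => le_rfl))⟩
      rcases hp : A.pending q (C.pstate q) with _ | ⟨o, a⟩
      · exact ih hC h ihO (by rwa [List.replicate_succ, run, step_of_pending_eq_none hp] at hm)
      have hpD : A.pending q (D.pstate q) = some ⟨o, a⟩ := h.pstate ▸ hp
      obtain rfl | ho := eq_or_ne o O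
      · by_cases ha : (A.objType o).δ (C.oval o) a = (A.objType o).δ (D.oval o) a
        · exact lift ((h.step_of_eq hp ha).compatible hW (hC.applyEvent _) 0 0)
        · obtain ⟨b, hb⟩ := ihO a ha ((hC.applyEvent (.step q)).applyEvent (.crash q))
            (h.step_crash hp) (by simp [crash_oval, step_oval hp])
            (by simp [crash_oval, step_oval hpD])
          exact lift (hb.of_reflTransGen (.single (.crash hq b.lt_succ_self))
            (.single (.crash hq b.lt_succ_self)))
      · obtain ⟨b, hb⟩ := ih (hC.applyEvent (.step q)) (h.step_of_ne hp ho)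
          (by simpa [step_oval hp, step_oval hpD, ho.symm] using ihO) hm
        exact lift hb

lemma oval_run_steps [DecidableEq A.ObjIdx] {ops : Fin N → (A.objType O).Op} {l : List (Fin N)}
    (hops : ∀ i ∈ l, A.pending i (C.pstate i) = some ⟨O, ops i⟩) (hl : l.Nodup) :
    (run A input C (l.map .step)).oval =
      Function.update C.oval O (applyOps (A.objType O) ops (C.oval O) l) := by
  induction l generalizing C with
  | nil => exact (Function.update_eq_self ..).symm
  | cons i l ih =>
    rw [List.nodup_cons] at hl
    have hops' (j) (hj : j ∈ l) :
        A.pending j ((applyEvent A input C (.step i)).pstate j) = some ⟨O, ops j⟩ := by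
      rw [step_pstate_of_ne (ne_of_mem_of_not_mem hj hl.1)]
      exact hops j (List.mem_cons_of_mem i hj)
    refine (ih hops' hl.2).trans ?_
    rw [step_oval (hops i List.mem_cons_self), Function.update_idem, Function.update_self]
    rfl

theorem not_solvesRecConsensus (hN : 2 ≤ N) (hT : ∀ o, ConcealsFirst (A.objType o) N) :
    ¬ SolvesRecConsensus A := by
  classical
  rintro ⟨hA, hV, hW⟩
  have : Nontrivial (Fin N) := Fin.nontrivial_iff_two_le.2 hN
  obtain ⟨p₁, p₀, hp⟩ := exists_pair_ne (Fin N)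
  obtain ⟨input, C, team, h⟩ := exists_teamSplit hA hV hW hp
  obtain ⟨O, ops, hops, hconf⟩ := h.exists_conflict hW
  obtain ⟨q, hq⟩ := h.exists_ne
  have hqp : q ≠ p₀ := ne_of_apply_ne team hq
  let D (i : Fin N) : Config A :=
    applyEvent A input (run A input C ((firstSched i).map .step)) (.crash q)
  have oval_D (i : Fin N) : (D i).oval =
      Function.update C.oval O (applyOps (A.objType O) ops (C.oval O) (firstSched i)) :=
    oval_run_steps (fun j _ => hops j) (nodup_firstSched i)
  have oval_D_self (i : Fin N) :
      (D i).oval O = applyOps (A.objType O) ops (C.oval O) (firstSched i) := by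
    rw [oval_D, Function.update_self]
  have hoff : IndistOff O q (D q) (D p₀) :=
    ⟨crash_pstate_self.trans crash_pstate_self.symm, fun o ho => by simp [oval_D, ho]⟩
  obtain ⟨b, hb⟩ := (hT O _ ops team hconf q p₀ hq).exists_compatible hW hqp
    ((h.reachable.run _).applyEvent _) hoff (oval_D_self q) (oval_D_self p₀)
  have crash (i : Fin N) : Move input p₀ (run A input C ((firstSched i).map .step), b + 1)
      (D i, b) := .crash hqp b.lt_succ_self
  have p₀_mem : p₀ ∈ (List.finRange N).erase q :=
    (List.mem_erase_of_ne hqp.symm).2 (List.mem_finRange p₀)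
  exact h.not_compatible hq (fun _ => rfl) (absurd rfl)
    (.tail (reflTransGen_move_steps _ fun h => absurd p₀_mem h) (crash q))
    (.tail (reflTransGen_move_steps (b := b + 1) _ fun _ => rfl) (crash p₀)) hb

end Impossibility

section RaceAlgorithm

/-- The local states of a process in the consensus algorithm: about to read, about to update the
object with its own input, and decided. -/
inductive RaceState : Type
  | start : Bool → RaceState
  | ready : Bool → RaceState
  | done : Bool → RaceState

/-- The operation `op_x`. -/
def TOp.ofBool : Bool → TOp
  | false => .op0
  | true => .op1

namespace RaceState

/-- The next operation of a process. -/
def op : RaceState → Option TOp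
  | start _ => some .opR
  | ready x => some (.ofBool x)
  | done _ => none

/-- The effect of a response on the local state. Whenever the response reveals the first update,
the process decides for it; responses that no execution produces lead to an arbitrary decision. -/
def next {n : ℕ} : RaceState → TResp n → RaceState
  | start x, .val .s => ready x
  | start _, .val (.mid y _) => done y
  | ready _, .bit y => done y
  | start x, _ | ready x, _ | done x, _ => done x

/-- The decision of a process. -/
def output : RaceState → Option Bool
  | done x => some x
  | _ => none

/-- The number of operations that remain to be applied, at most. -/
def rank : RaceState → ℕ
  | start _ => 2
  | ready _ => 1
  | done _ => 0

/-- The number of updates that a process may apply without reading the object first. -/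
def pendingUpdates : RaceState → ℕ
  | ready _ => 1
  | _ => 0

lemma pendingUpdates_le_one (st : RaceState) : st.pendingUpdates ≤ 1 := by
  rcases st with _ | _ | _ <;> simp [pendingUpdates]

lemma rank_next_lt {n : ℕ} {st : RaceState} (h : st.output = none) (resp : TResp n) :
    (st.next resp).rank < st.rank := by
  rcases st with x | x | x
  · rcases resp with _ | (_ | _ | _) | _ <;> simp [next, rank]
  · rcases resp with _ | _ | _ <;> simp [next, rank]
  · simp [output] at h

end RaceState

variable {N n n' : ℕ} {hn : 2 ≤ n} {input : Fin N → Bool}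

/-- The argument of the first update, as far as it is recorded in the value of the object. -/
def TVal.winner : TVal n → Option Bool
  | .mid x _ => some x
  | _ => none

lemma apply_ofBool {v : TVal n} (h : v.updates < n - 1) (x : Bool) :
    (TType n n' hn).δ v (.ofBool x) =
      (.bit (v.winner.getD x), .mid (v.winner.getD x) ⟨v.updates, h⟩) := by
  rcases v with _ | _ | ⟨y, k⟩
  · cases x <;> rfl
  · exact absurd h (by simp [TVal.updates])
  · have hk : (k : ℕ) + 1 < n - 1 := h
    cases x <;> simp [TType, TOp.ofBool, TVal.winner, TVal.updates, hk]

/-- Consensus from a single object: read it, if it still has the value `s` apply the update for the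
own input, and decide for the first update. -/
def raceAlgorithm (N n n' : ℕ) (hn : 2 ≤ n) : Algorithm N where
  ObjIdx := Unit
  objType _ := TType n n' hn
  objInit _ := .s
  PState _ := RaceState
  init _ x := .start x
  pending _ st := st.op.map fun a => ⟨(), a⟩
  next _ st _ resp := st.next resp
  output _ st := st.output
  output_noop _ st h := by
    rcases st with _ | _ | _
    exacts [absurd rfl h, absurd rfl h, rfl]

lemma usesTypeAndRegisters_raceAlgorithm :
    UsesTypeAndRegisters (raceAlgorithm N n n' hn) (TType n n' hn) :=
  fun _ => .inl rfl

lemma recWaitFree_raceAlgorithm : RecWaitFree (raceAlgorithm N n n' hn) := by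
  refine recWaitFree_of_rank (fun _ => RaceState.rank) fun _ st hst => ?_
  rcases st with x | x | x
  · exact ⟨(), .opR, rfl, RaceState.rank_next_lt hst⟩
  · exact ⟨(), .ofBool x, rfl, RaceState.rank_next_lt hst⟩
  · cases hst

/-- The invariant of the algorithm, for the local states `st` and the value `v` of the object. -/
structure RaceInvariant (input : Fin N → Bool) (st : Fin N → RaceState) (v : TVal n) : Prop where
  updates_le : v.updates + ∑ i, (st i).pendingUpdates ≤ N
  state (i : Fin N) : st i = .start (input i) ∨ st i = .ready (input i) ∨
    ∃ x, st i = .done x ∧ v.winner = some x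
  valid (x : Bool) : v.winner = some x → ∃ j, input j = x

namespace RaceInvariant

variable {st : Fin N → RaceState} {v w : TVal n} {i : Fin N} {x : Bool}

lemma initial : RaceInvariant (n := n) input (fun i => .start (input i)) .s :=
  ⟨by simp [TVal.updates, RaceState.pendingUpdates], fun _ => .inl rfl, fun _ h => by cases h⟩

lemma update (h : RaceInvariant input st v) {t : RaceState}
    (hupdates : w.updates + ∑ j, (Function.update st i t j).pendingUpdates ≤ N)
    (ht : t = .start (input i) ∨ t = .ready (input i) ∨ ∃ x, t = .done x ∧ w.winner = some x)
    (hwinner : ∀ x, v.winner = some x → w.winner = some x)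
    (hvalid : ∀ x, w.winner = some x → ∃ j, input j = x) :
    RaceInvariant input (Function.update st i t) w := by
  refine ⟨hupdates, fun j => ?_, hvalid⟩
  obtain rfl | hj := eq_or_ne j i
  · rwa [Function.update_self]
  · rw [Function.update_of_ne hj]
    exact (h.state j).imp_right (.imp_right fun ⟨x, hx, hv⟩ => ⟨x, hx, hwinner x hv⟩)

lemma crash (h : RaceInvariant input st v) (i : Fin N) :
    RaceInvariant input (Function.update st i (.start (input i))) v := by
  refine h.update ?_ (.inl rfl) (fun _ => id) h.valid
  have := sum_update_add RaceState.pendingUpdates st i (.start (input i))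
  have : RaceState.pendingUpdates (.start (input i)) = 0 := rfl
  have := h.updates_le
  omega

lemma read (h : RaceInvariant input st v) (hNn' : N ≤ n') (hNn : N < n)
    (hi : st i = .start (input i)) :
    (∀ x, v.winner = some x → TVal.winner ((TType n n' hn).δ v .opR).2 = some x) ∧
    RaceInvariant input (Function.update st i ((st i).next ((TType n n' hn).δ v .opR).1))
      ((TType n n' hn).δ v .opR).2 := by
  have hv := h.updates_le
  rw [read_of_updates_le (by omega) (by omega), hi]
  refine ⟨fun _ => id, ?_⟩
  rcases v with _ | _ | ⟨y, k⟩
  · refine h.update ?_ (.inr (.inl rfl)) (fun _ => id) h.valid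
    calc 0 + ∑ j, (Function.update st i (.ready (input i)) j).pendingUpdates
        ≤ 0 + ∑ _j : Fin N, 1 := by
          gcongr
          exact RaceState.pendingUpdates_le_one _
      _ = N := by simp
  · exact absurd hv (by simp only [TVal.updates]; omega)
  · refine h.update ?_ (.inr (.inr ⟨y, rfl, rfl⟩)) (fun _ => id) h.valid
    have := sum_update_add RaceState.pendingUpdates st i (.done y)
    have : RaceState.pendingUpdates (.done y) = 0 := rfl
    change TVal.updates (.mid y k) + ∑ j, (Function.update st i (.done y) j).pendingUpdates ≤ N
    omega

lemma apply_update (h : RaceInvariant input st v) (hNn : N < n)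
    (hi : st i = .ready (input i)) :
    (∀ x, v.winner = some x →
      TVal.winner ((TType n n' hn).δ v (.ofBool (input i))).2 = some x) ∧
    RaceInvariant input
      (Function.update st i ((st i).next ((TType n n' hn).δ v (.ofBool (input i))).1))
      ((TType n n' hn).δ v (.ofBool (input i))).2 := by
  set y := v.winner.getD (input i) with hy
  have hsum : _ + 1 = _ + 0 := hi ▸ sum_update_add RaceState.pendingUpdates st i (.done y)
  have hv := h.updates_le
  rw [apply_ofBool (by omega), hi]
  have hwinner (x) (hx : v.winner = some x) : some y = some x := by rw [hy, hx]; rfl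
  refine ⟨hwinner, h.update ?_ (.inr (.inr ⟨y, rfl, rfl⟩)) hwinner fun x hx => ?_⟩
  · change v.updates + 1 + ∑ j, (Function.update st i (.done y) j).pendingUpdates ≤ N
    omega
  · obtain rfl : y = x := Option.some.inj hx
    rcases hw : v.winner with _ | z
    · exact ⟨i, by simp [hy, hw]⟩
    · exact h.valid y (by simp [hy, hw])

lemma step (h : RaceInvariant input st v) (hNn' : N ≤ n') (hNn : N < n) {a : TOp}
    (ha : (st i).op = some a) :
    (∀ x, v.winner = some x → TVal.winner ((TType n n' hn).δ v a).2 = some x) ∧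
    RaceInvariant input (Function.update st i ((st i).next ((TType n n' hn).δ v a).1))
      ((TType n n' hn).δ v a).2 := by
  rcases h.state i with hi | hi | ⟨x, hi, -⟩ <;> rw [hi] at ha <;> cases ha
  exacts [h.read hNn' hNn hi, h.apply_update hNn hi]

lemma winner_eq_of_output (h : RaceInvariant input st v) (hx : (st i).output = some x) :
    v.winner = some x := by
  rcases h.state i with hi | hi | ⟨y, hi, hy⟩ <;> rw [hi] at hx <;> cases hx
  exact hy

lemma applyEvent {C : Config (raceAlgorithm N n n' hn)}
    (h : RaceInvariant input C.pstate (C.oval ())) (hNn' : N ≤ n') (hNn : N < n) (e : Event N) :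
    (∀ x, TVal.winner (C.oval ()) = some x →
      TVal.winner ((applyEvent _ input C e).oval ()) = some x) ∧
    RaceInvariant input (applyEvent _ input C e).pstate ((applyEvent _ input C e).oval ()) := by
  let : DecidableEq (raceAlgorithm N n n' hn).ObjIdx := inferInstanceAs (DecidableEq Unit)
  rcases e with i | i
  · rcases ha : RaceState.op (C.pstate i) with _ | a
    · have hp : (raceAlgorithm N n n' hn).pending i (C.pstate i) = none :=
        congrArg (Option.map _) ha
      rw [step_of_pending_eq_none hp]
      exact ⟨fun _ => id, h⟩
    · have hp : (raceAlgorithm N n n' hn).pending i (C.pstate i) = some ⟨(), a⟩ :=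
        congrArg (Option.map _) ha
      rw [step_of_pending_eq_some hp]
      exact h.step (hn := hn) hNn' hNn ha
  · exact ⟨fun _ => id, h.crash i⟩

lemma run {C : Config (raceAlgorithm N n n' hn)}
    (h : RaceInvariant input C.pstate (C.oval ())) (hNn' : N ≤ n') (hNn : N < n)
    (σ : List (Event N)) :
    (∀ x, TVal.winner (C.oval ()) = some x → TVal.winner ((run _ input C σ).oval ()) = some x) ∧
    RaceInvariant input (run _ input C σ).pstate ((run _ input C σ).oval ()) := by
  induction σ generalizing C with
  | nil => exact ⟨fun _ => id, h⟩
  | cons e σ ih =>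
    have he := h.applyEvent hNn' hNn e
    exact ⟨fun x hx => (ih he.2).1 x (he.1 x hx), (ih he.2).2⟩

end RaceInvariant

lemma raceInvariant_run_initConfig (hNn' : N ≤ n') (hNn : N < n) (σ : List (Event N)) :
    let C := run _ input (initConfig (raceAlgorithm N n n' hn) input) σ
    RaceInvariant input C.pstate (C.oval ()) :=
  (RaceInvariant.run .initial hNn' hNn σ).2

lemma agreement_raceAlgorithm (hNn' : N ≤ n') (hNn : N < n) :
    Agreement (raceAlgorithm N n n' hn) := by
  rintro input σ i j x y ⟨τ, hτ, hx⟩ ⟨τ', hτ', hy⟩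
  wlog hle : τ <+: τ' generalizing i j x y τ τ'
  · exact (this j i y x τ' hτ' hy τ hτ hx
      ((List.prefix_or_prefix_of_prefix hτ hτ').resolve_left hle)).symm
  obtain ⟨ρ, rfl⟩ := hle
  have hinv := raceInvariant_run_initConfig (hn := hn) (input := input) hNn' hNn τ
  rw [run_append] at hy
  have hrun := hinv.run hNn' hNn ρ
  exact Option.some.inj ((hrun.1 x (hinv.winner_eq_of_output hx)).symm.trans
    (hrun.2.winner_eq_of_output hy))

lemma validity_raceAlgorithm (hNn' : N ≤ n') (hNn : N < n) :
    Validity (raceAlgorithm N n n' hn) := by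
  rintro input σ i x ⟨τ, -, hx⟩
  have hinv := raceInvariant_run_initConfig (hn := hn) (input := input) hNn' hNn τ
  exact hinv.valid x (hinv.winner_eq_of_output hx)

theorem solvesRecConsensus_raceAlgorithm (hNn' : N ≤ n') (hNn : N < n) :
    SolvesRecConsensus (raceAlgorithm N n n' hn) :=
  ⟨agreement_raceAlgorithm hNn' hNn, validity_raceAlgorithm hNn' hNn, recWaitFree_raceAlgorithm⟩

end RaceAlgorithm

end RecoverableConsensus

open RecoverableConsensus in
theorem TType_recoverable_consensus_number_general {n n' : ℕ} (h1 : 1 ≤ n') (hn : 2 ≤ n) (N : ℕ) :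
    (∃ A : Algorithm N, UsesTypeAndRegisters A (TType n n' hn) ∧ SolvesRecConsensus A) ↔
      N ≤ n' ∧ N < n := by
  refine ⟨fun ⟨A, hT, hA⟩ => ?_, fun ⟨hNn', hNn⟩ => ⟨_, usesTypeAndRegisters_raceAlgorithm,
    solvesRecConsensus_raceAlgorithm hNn' hNn⟩⟩
  by_contra hN
  refine not_solvesRecConsensus (by omega) (fun o => ?_) hA
  obtain ho | ho := hT o
  · exact ho ▸ concealsFirst_TType (by omega)
  · exact concealsFirst_of_isRegister ho N

open RecoverableConsensus in
/-- For all integers `n > n' ≥ 1`, the type `𝒯_{n,n'}` has recoverable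
consensus number exactly `n'`: there is a recoverable wait-free binary consensus algorithm
for `n'` processes using objects of type `𝒯_{n,n'}` together with registers, but no such
algorithm for `n'+1` processes. -/
theorem TType_recoverable_consensus_number
    (n n' : ℕ) (h1 : 1 ≤ n') (h2 : n' < n) (hn : 2 ≤ n) :
    (∃ A : Algorithm n', UsesTypeAndRegisters A (TType n n' hn) ∧ SolvesRecConsensus A) ∧
    ¬ (∃ A : Algorithm (n' + 1),
        UsesTypeAndRegisters A (TType n n' hn) ∧ SolvesRecConsensus A) :=
  ⟨(TType_recoverable_consensus_number_general h1 hn n').2 ⟨le_rfl, h2⟩,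
    mt (TType_recoverable_consensus_number_general h1 hn (n' + 1)).1 (by omega)⟩
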